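/- Let a, b, c be pairwise distinct elements of ℂ ∖ {0,1}; define the linear polynomials in z: A₁ = (b−z)/(b−c), B₁ = (c−z)/(c−b), and the constants a₁ = (a−b)/(b−c), b₁ = (a−c)/(c−b). Then there is a ℂ-algebra isomorphism φ between the function field of the affine surface S₁: w³·t₂³·z(z−1) = (A₁·t₂ + a₁)(B₁·t₂ + b₁) (coordinates (w,t₂,z)) and the function field of the affine surface S₂: w₁³·z(z−1)·A₁B₁(A₁b₁ − B₁a₁) = t₃(t₃+1) (coordinates (z,t₃,w₁)), and φ intertwines the order-3 automorphism w ↦ ω²·w of the first with the order-3 automorphism w₁ ↦ ω²·w₁ of the second (each fixing the remaining coordinates). An isomorphism is induced by the substitution t₃ = (t₂ + a₁/A₁)/(b₁/B₁ − a₁/A₁), w₁ = w·t₂/(A₁B₁·(b₁/B₁ − a₁/A₁)) (with z unchanged). -/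

import Mathlib

/-!
Formalization conventions.

* The function field of an affine variety whose coordinate ring `ℂ[x₁,…,xₙ]/I` is an
  integral domain is formalized as `FractionRing` of that coordinate ring (for the total
  rings of fractions of the rings appearing here this is the function field).
* Two such varieties are birationally equivalent iff their function fields are
  isomorphic as `ℂ`-algebras.
-/

noncomputable section
open MvPolynomial

/-- `ω = exp(2πi/3) ∈ ℂ`, a fixed primitive cube root of unity. -/
def ω : ℂ := Complex.exp (2 * Real.pi * Complex.I / 3)

/-- Coordinate ring of the affine hypersurface `f = 0` in `ℂⁿ`. -/
abbrev HSurf {n : ℕ} (f : MvPolynomial (Fin n) ℂ) : Type :=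
  MvPolynomial (Fin n) ℂ ⧸ Ideal.span {f}

/-- Coordinate ring of the affine variety `f = g = 0` in `ℂⁿ`. -/
abbrev HSurf2 {n : ℕ} (f g : MvPolynomial (Fin n) ℂ) : Type :=
  MvPolynomial (Fin n) ℂ ⧸ Ideal.span {f, g}

/-- The image of a polynomial `p` in the function field of the hypersurface `f = 0`. -/
def cls {n : ℕ} (f : MvPolynomial (Fin n) ℂ) (p : MvPolynomial (Fin n) ℂ) :
    FractionRing (HSurf f) :=
  algebraMap (HSurf f) (FractionRing (HSurf f)) (Ideal.Quotient.mk _ p)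

/-- The image of a polynomial `p` in the function field of the variety `f = g = 0`. -/
def cls2 {n : ℕ} (f g : MvPolynomial (Fin n) ℂ) (p : MvPolynomial (Fin n) ℂ) :
    FractionRing (HSurf2 f g) :=
  algebraMap (HSurf2 f g) (FractionRing (HSurf2 f g)) (Ideal.Quotient.mk _ p)

/-- `A₁ = (b−z)/(b−c)`, a linear polynomial in `z`, in the coordinates of `S₁`
(`w = X 0`, `t₂ = X 1`, `z = X 2`). -/
def A₁ (b c : ℂ) : MvPolynomial (Fin 3) ℂ := C (b - c)⁻¹ * (C b - X 2)

/-- `B₁ = (c−z)/(c−b)`. -/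
def B₁ (b c : ℂ) : MvPolynomial (Fin 3) ℂ := C (c - b)⁻¹ * (C c - X 2)

/-- The constant `a₁ = (a−b)/(b−c)`. -/
def a₁ (a b c : ℂ) : ℂ := (a - b) / (b - c)

/-- The constant `b₁ = (a−c)/(c−b)`. -/
def b₁ (a b c : ℂ) : ℂ := (a - c) / (c - b)

/-- Defining polynomial of the affine surface `S₁ : w³·t₂³·z(z−1) = (A₁t₂+a₁)(B₁t₂+b₁)`. -/
def pS₁ (a b c : ℂ) : MvPolynomial (Fin 3) ℂ :=
  X 0 ^ 3 * X 1 ^ 3 * X 2 * (X 2 - 1)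
    - (A₁ b c * X 1 + C (a₁ a b c)) * (B₁ b c * X 1 + C (b₁ a b c))

/-- `A₁` as a polynomial in the coordinates of `S₂` (`z = X 0`, `t₃ = X 1`, `w₁ = X 2`). -/
def A₁' (b c : ℂ) : MvPolynomial (Fin 3) ℂ := C (b - c)⁻¹ * (C b - X 0)

/-- `B₁` as a polynomial in the coordinates of `S₂`. -/
def B₁' (b c : ℂ) : MvPolynomial (Fin 3) ℂ := C (c - b)⁻¹ * (C c - X 0)

/-- Defining polynomial of the affine surface `S₂ : w₁³·z(z−1)·A₁B₁(A₁b₁ − B₁a₁) = t₃(t₃+1)`. -/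
def pS₂ (a b c : ℂ) : MvPolynomial (Fin 3) ℂ :=
  X 2 ^ 3 * (X 0 * (X 0 - 1) * A₁' b c * B₁' b c
      * (A₁' b c * C (b₁ a b c) - B₁' b c * C (a₁ a b c)))
    - X 1 * (X 1 + 1)

/-!
A `T`-valued point of `S₁` is an algebra homomorphism `Φ : ℂ[w, t₂, z] → T` killing `pS₁`, and
similarly for `S₂`. Writing `δ = A₁b₁ - B₁a₁`, the substitution of the theorem relates `T`-valued
points of the two ambient spaces, and the identity `δ² · pS₂ = A₁ B₁ · pS₁` holds for related
points. Hence the relation is a bijection, natural in `T`, between the points of `S₁` with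
`A₁ B₁ δ t₂` invertible and the points of `S₂` with `A₁ B₁ δ (δ t₃ - a₁ B₁)` invertible (the last
factor is `A₁ B₁ t₂`). By Yoneda these open subsets are isomorphic. Their equations are
coprime to those of the surfaces, so they are nonzerodivisors and inverting them does not change the
total ring of fractions. Both automorphisms scale the `w`-coordinate, which the relation respects,
so uniqueness of the related point gives equivariance.
-/

open nonZeroDivisors

section OpenSubsets

variable {k P T : Type*} [CommRing k] [CommRing P] [Algebra k P] [CommRing T] [Algebra k T]

theorem mk_mem_nonZeroDivisors_of_isRelPrime [DecompositionMonoid P] {f r : P}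
    (h : IsRelPrime f r) : Ideal.Quotient.mk (Ideal.span {f}) r ∈ (P ⧸ Ideal.span {f})⁰ := by
  rw [mem_nonZeroDivisors_iff_right]
  intro x hx
  obtain ⟨p, rfl⟩ := Ideal.Quotient.mk_surjective x
  rw [← map_mul, Ideal.Quotient.eq_zero_iff_dvd] at hx
  exact (Ideal.Quotient.eq_zero_iff_dvd _ _).2 (h.dvd_of_dvd_mul_right hx)

theorem exists_isFractionRing_localizationAway {R : Type*} [CommRing R] {x : R} (hx : x ∈ R⁰) :
    ∃ ι : Localization.Away x →ₐ[R] FractionRing R,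
      @IsFractionRing (Localization.Away x) _ (FractionRing R) _ ι.toAlgebra := by
  have hle : Submonoid.powers x ≤ R⁰ := Submonoid.powers_le.2 hx
  let ι : Localization.Away x →ₐ[R] FractionRing R :=
    IsLocalization.liftAlgHom (M := .powers x) (f := Algebra.ofId R (FractionRing R))
      fun y => IsLocalization.map_units _ (⟨y, hle y.2⟩ : R⁰)
  let := ι.toAlgebra
  have : IsScalarTower R (Localization.Away x) (FractionRing R) := .of_algHom ι
  exact ⟨ι, IsFractionRing.isFractionRing_of_isLocalization (.powers x) _ _ hle⟩

theorem exists_fractionRing_algEquiv_extending {R S : Type*} [CommRing R] [Algebra k R]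
    [CommRing S] [Algebra k S] {x : R} {y : S} (hx : x ∈ R⁰) (hy : y ∈ S⁰)
    (e : Localization.Away x ≃ₐ[k] Localization.Away y) :
    ∃ (φ : FractionRing R ≃ₐ[k] FractionRing S)
      (ι : Localization.Away y →ₐ[S] FractionRing S),
      ∀ r, φ (algebraMap R _ r) = ι (e (algebraMap R _ r)) := by
  obtain ⟨κ, hκ⟩ := exists_isFractionRing_localizationAway hx
  obtain ⟨ι, hι⟩ := exists_isFractionRing_localizationAway hy
  let := κ.toAlgebra
  let := ι.toAlgebra
  have : IsScalarTower k (Localization.Away x) (FractionRing R) :=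
    .of_algHom (κ.restrictScalars k)
  have : IsScalarTower k (Localization.Away y) (FractionRing S) :=
    .of_algHom (ι.restrictScalars k)
  refine ⟨IsFractionRing.algEquivOfAlgEquiv e, ι, fun r => ?_⟩
  rw [← κ.commutes]
  exact IsFractionRing.algEquivOfAlgEquiv_algebraMap e _

/-- The coordinate ring of the open subset `r ≠ 0` of the hypersurface `f = 0`. -/
abbrev OpenSubset (f r : P) : Type _ :=
  Localization.Away (Ideal.Quotient.mk (Ideal.span {f}) r)

variable (k) in
/-- The restriction of functions to the open subset `r ≠ 0` of the hypersurface `f = 0`; this is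
the universal point of that subset. -/
def toOpen (f r : P) : P →ₐ[k] OpenSubset f r :=
  IsScalarTower.toAlgHom k P _

variable (k) in
/-- The map from functions on the ambient space to the total ring of fractions of the hypersurface
`f = 0`, bundling `cls` as an algebra homomorphism. -/
def toFrac (f : P) : P →ₐ[k] FractionRing (P ⧸ Ideal.span {f}) :=
  IsScalarTower.toAlgHom k P _

theorem toOpen_self (f r : P) : toOpen k f r f = 0 := by
  change algebraMap _ _ (Ideal.Quotient.mk (Ideal.span {f}) f) = 0
  rw [Ideal.Quotient.mk_singleton_self, map_zero]

theorem isUnit_toOpen (f r : P) : IsUnit (toOpen k f r r) :=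
  IsLocalization.Away.algebraMap_isUnit (Ideal.Quotient.mk (Ideal.span {f}) r)

theorem toOpen_algHom_ext {f r : P} {F G : OpenSubset f r →ₐ[k] T}
    (h : F.comp (toOpen k f r) = G.comp (toOpen k f r)) : F = G :=
  Localization.algHom_ext _ (Ideal.Quotient.algHom_ext _ h)

theorem exists_comp_toOpen_eq {f r : P} {Φ : P →ₐ[k] T} (hf : Φ f = 0) (hr : IsUnit (Φ r)) :
    ∃ F : OpenSubset f r →ₐ[k] T, F.comp (toOpen k f r) = Φ := by
  let g : (P ⧸ Ideal.span {f}) →ₐ[k] T := Ideal.Quotient.liftₐ (Ideal.span {f}) Φ fun p hp => by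
    obtain ⟨q, rfl⟩ := Ideal.mem_span_singleton.1 hp
    rw [map_mul, hf, zero_mul]
  have hg : IsUnit (g (Ideal.Quotient.mk (Ideal.span {f}) r)) := hr
  let F : OpenSubset f r →ₐ[k] T := IsLocalization.Away.liftAlgHom _ hg
  have hF : F.comp (IsScalarTower.toAlgHom k (P ⧸ Ideal.span {f}) _) = g :=
    AlgHom.ext fun p => IsLocalization.Away.lift_eq _ hg _
  refine ⟨F, AlgHom.ext fun p => ?_⟩
  exact DFunLike.congr_fun hF (Ideal.Quotient.mk _ p)

theorem exists_openSubset_algEquiv_of_comp_eq {f g r s : P}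
    {F : OpenSubset f r →ₐ[k] OpenSubset g s} {G : OpenSubset g s →ₐ[k] OpenSubset f r}
    (hGF : G.comp (F.comp (toOpen k f r)) = toOpen k f r)
    (hFG : F.comp (G.comp (toOpen k g s)) = toOpen k g s) :
    ∃ e : OpenSubset f r ≃ₐ[k] OpenSubset g s, e.toAlgHom = F :=
  ⟨.ofAlgHom F G (toOpen_algHom_ext (by rw [AlgHom.comp_assoc, hFG, AlgHom.id_comp]))
    (toOpen_algHom_ext (by rw [AlgHom.comp_assoc, hGF, AlgHom.id_comp])), rfl⟩

theorem toFrac_eq_zero_iff {f p : P} : toFrac k f p = 0 ↔ f ∣ p := by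
  change algebraMap _ _ (Ideal.Quotient.mk (Ideal.span {f}) p) = 0 ↔ _
  rw [map_eq_zero_iff _ (IsFractionRing.injective _ _), Ideal.Quotient.eq_zero_iff_dvd]

theorem isUnit_toFrac [DecompositionMonoid P] {f r : P} (h : IsRelPrime f r) :
    IsUnit (toFrac k f r) :=
  IsLocalization.map_units _
    (⟨_, mk_mem_nonZeroDivisors_of_isRelPrime h⟩ : (P ⧸ Ideal.span {f})⁰)

theorem toFrac_algHom_ext {f : P} {F G : FractionRing (P ⧸ Ideal.span {f}) →ₐ[k] T}
    (h : F.comp (toFrac k f) = G.comp (toFrac k f)) : F = G :=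
  Localization.algHom_ext _ (Ideal.Quotient.algHom_ext _ h)

theorem semiconj_of_comp_toFrac_eq {f : P} {σ : FractionRing (P ⧸ Ideal.span {f}) ≃ₐ[k] _}
    {τ : T ≃ₐ[k] T} {φ : FractionRing (P ⧸ Ideal.span {f}) ≃ₐ[k] T}
    (h : φ.toAlgHom.comp (σ.toAlgHom.comp (toFrac k f)) =
      τ.toAlgHom.comp (φ.toAlgHom.comp (toFrac k f))) : Function.Semiconj φ σ τ :=
  DFunLike.congr_fun
    (toFrac_algHom_ext (F := φ.toAlgHom.comp σ.toAlgHom) (G := τ.toAlgHom.comp φ.toAlgHom) h)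

theorem exists_toFrac_algEquiv_extending [DecompositionMonoid P] {f g r s : P}
    (hr : IsRelPrime f r) (hs : IsRelPrime g s) (e : OpenSubset f r ≃ₐ[k] OpenSubset g s) :
    ∃ (φ : FractionRing (P ⧸ Ideal.span {f}) ≃ₐ[k] FractionRing (P ⧸ Ideal.span {g}))
      (ι : OpenSubset g s →ₐ[k] FractionRing (P ⧸ Ideal.span {g})),
      ι.comp (toOpen k g s) = toFrac k g ∧
      φ.toAlgHom.comp (toFrac k f) = ι.comp (e.toAlgHom.comp (toOpen k f r)) := by
  obtain ⟨φ, ι, h⟩ := exists_fractionRing_algEquiv_extending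
    (mk_mem_nonZeroDivisors_of_isRelPrime hr) (mk_mem_nonZeroDivisors_of_isRelPrime hs) e
  exact ⟨φ, ι.restrictScalars k, AlgHom.ext fun p => ι.commutes _, AlgHom.ext fun p => h _⟩

end OpenSubsets

section Scaling

variable {k P σ : Type*} [CommRing k] [CommRing P] [Algebra k P]

/-- The action of the multiplicative group on affine space that scales the `i`-th coordinate. -/
def scaleX [DecidableEq σ] (i : σ) : kˣ →* (MvPolynomial σ k ≃ₐ[k] MvPolynomial σ k) :=
  (AlgEquiv.algHomUnitsEquiv k _).toMonoidHom.comp <| Units.map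
    { toFun u := aeval (Function.update X i (C u * X i))
      map_one' := by ext; simp
      map_mul' u v := by
        ext j : 1
        obtain rfl | hj := eq_or_ne j i
        · simp [mul_left_comm, mul_assoc]
        · simp [hj] }

theorem scaleX_X_self [DecidableEq σ] (i : σ) (u : kˣ) : scaleX i u (X i) = C (u : k) * X i := by
  simp [scaleX]

theorem scaleX_X_of_ne [DecidableEq σ] {i j : σ} (h : j ≠ i) (u : kˣ) :
    scaleX i u (X j) = X j := by
  simp [scaleX, h]

theorem exists_fracAut_of_fixed {f : P} {e : P ≃ₐ[k] P} (he : e f = f) :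
    ∃ τ : FractionRing (P ⧸ Ideal.span {f}) ≃ₐ[k] FractionRing (P ⧸ Ideal.span {f}),
      ∀ (m : ℕ) p, (τ ^ m) (toFrac k f p) = toFrac k f ((e ^ m) p) := by
  let q : (P ⧸ Ideal.span {f}) ≃ₐ[k] (P ⧸ Ideal.span {f}) :=
    Ideal.quotientEquivAlg _ _ e (by
      rw [Ideal.map_span, Set.image_singleton]
      exact congrArg (fun p => Ideal.span {p}) he.symm)
  have hq (p : P) : IsFractionRing.algEquivOfAlgEquiv q (toFrac k f p) = toFrac k f (e p) :=
    IsFractionRing.algEquivOfAlgEquiv_algebraMap q _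
  refine ⟨IsFractionRing.algEquivOfAlgEquiv q, fun m => ?_⟩
  induction m with
  | zero => exact fun p => rfl
  | succ m ih => exact fun p => by rw [pow_succ, pow_succ, AlgEquiv.mul_apply, hq, ih]; rfl

theorem exists_fracAut_scaling {K : Type*} [Field K] [DecidableEq σ] {f : MvPolynomial σ K}
    {i : σ} {u : Kˣ}
    (hu : scaleX i u f = f) (hi : ¬ f ∣ X i) :
    ∃ τ : FractionRing (MvPolynomial σ K ⧸ Ideal.span {f}) ≃ₐ[K]
        FractionRing (MvPolynomial σ K ⧸ Ideal.span {f}),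
      orderOf τ = orderOf u ∧ τ (toFrac K f (X i)) = (u : K) • toFrac K f (X i) ∧
      ∀ j, j ≠ i → τ (toFrac K f (X j)) = toFrac K f (X j) := by
  obtain ⟨τ, hτ⟩ := exists_fracAut_of_fixed hu
  have hself (m : ℕ) : (τ ^ m) (toFrac K f (X i)) = ((u ^ m : Kˣ) : K) • toFrac K f (X i) := by
    rw [hτ, ← map_pow, scaleX_X_self, ← smul_eq_C_mul, map_smul]
  refine ⟨τ, orderOf_eq_orderOf_iff.2 fun m => ⟨fun h => ?_, fun h => ?_⟩,
    by simpa using hself 1, fun j hj => ?_⟩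
  · have hfix : ((u ^ m : Kˣ) : K) • toFrac K f (X i) = (1 : K) • toFrac K f (X i) := by
      rw [← hself, h, one_smul, AlgEquiv.one_apply]
    exact Units.ext (smul_left_injective K (mt toFrac_eq_zero_iff.1 hi) hfix)
  · refine AlgEquiv.coe_toAlgHom_injective (toFrac_algHom_ext (AlgHom.ext fun p => ?_))
    change (τ ^ m) (toFrac K f p) = toFrac K f p
    rw [hτ, ← map_pow, h, map_one, AlgEquiv.one_apply]
  · simpa [scaleX_X_of_ne hj] using hτ 1 (X j)

end Scaling

section Correspondence

/-- `δ = A₁b₁ - B₁a₁` in the coordinates of `S₁`. -/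
def D₁ (a b c : ℂ) : MvPolynomial (Fin 3) ℂ :=
  A₁ b c * C (b₁ a b c) - B₁ b c * C (a₁ a b c)

/-- `δ = A₁b₁ - B₁a₁` in the coordinates of `S₂`. -/
def D₁' (a b c : ℂ) : MvPolynomial (Fin 3) ℂ :=
  A₁' b c * C (b₁ a b c) - B₁' b c * C (a₁ a b c)

/-- The polynomial `δ t₃ - a₁ B₁`, which the substitution turns into `A₁ B₁ t₂`. -/
def N₁' (a b c : ℂ) : MvPolynomial (Fin 3) ℂ :=
  D₁' a b c * X 1 - B₁' b c * C (a₁ a b c)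

/-- The equation of the locus to be removed from `S₁` to make the substitution biregular. -/
def E₁ (a b c : ℂ) : MvPolynomial (Fin 3) ℂ := A₁ b c * B₁ b c * D₁ a b c * X 1

/-- The equation of the locus to be removed from `S₂` to make the substitution biregular. -/
def E₂ (a b c : ℂ) : MvPolynomial (Fin 3) ℂ := A₁' b c * B₁' b c * D₁' a b c * N₁' a b c

variable {T T' : Type*} [CommRing T] [Algebra ℂ T] [CommRing T'] [Algebra ℂ T']
  {a b c : ℂ} {Φ Φ' Ψ Ψ' : MvPolynomial (Fin 3) ℂ →ₐ[ℂ] T}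

/-- The substitution of the theorem, cleared of denominators, as a relation between a point `Φ`
with coordinates `(w, t₂, z)` and a point `Ψ` with coordinates `(z, t₃, w₁)`. -/
structure Corresponds (a b c : ℂ) (Φ Ψ : MvPolynomial (Fin 3) ℂ →ₐ[ℂ] T) : Prop where
  z_eq : Ψ (X 0) = Φ (X 2)
  t_eq : Ψ (X 1) * Φ (D₁ a b c) = Φ (A₁ b c * B₁ b c * X 1 + C (a₁ a b c) * B₁ b c)
  w_eq : Ψ (X 2) * Φ (D₁ a b c) = Φ (X 0 * X 1)

theorem map_A₁_congr (h : Φ (X 2) = Φ' (X 2)) : Φ (A₁ b c) = Φ' (A₁ b c) := by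
  simp only [A₁, map_mul, map_sub, algHom_C, h]

theorem map_B₁_congr (h : Φ (X 2) = Φ' (X 2)) : Φ (B₁ b c) = Φ' (B₁ b c) := by
  simp only [B₁, map_mul, map_sub, algHom_C, h]

theorem map_D₁_congr (h : Φ (X 2) = Φ' (X 2)) : Φ (D₁ a b c) = Φ' (D₁ a b c) := by
  simp only [D₁, map_mul, map_sub, algHom_C, map_A₁_congr h, map_B₁_congr h]

theorem map_A₁'_eq (hz : Ψ (X 0) = Φ (X 2)) : Ψ (A₁' b c) = Φ (A₁ b c) := by
  simp only [A₁, A₁', map_mul, map_sub, algHom_C, hz]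

theorem map_B₁'_eq (hz : Ψ (X 0) = Φ (X 2)) : Ψ (B₁' b c) = Φ (B₁ b c) := by
  simp only [B₁, B₁', map_mul, map_sub, algHom_C, hz]

theorem map_D₁'_eq (hz : Ψ (X 0) = Φ (X 2)) : Ψ (D₁' a b c) = Φ (D₁ a b c) := by
  simp only [D₁, D₁', map_mul, map_sub, algHom_C, map_A₁'_eq hz, map_B₁'_eq hz]

theorem isUnit_map_D₁ (h : IsUnit (Φ (E₁ a b c))) : IsUnit (Φ (D₁ a b c)) := by
  simp only [E₁, map_mul, IsUnit.mul_iff] at h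
  exact h.1.2

namespace Corresponds

theorem comp (h : Corresponds a b c Φ Ψ) (F : T →ₐ[ℂ] T') :
    Corresponds a b c (F.comp Φ) (F.comp Ψ) where
  z_eq := congrArg F h.z_eq
  t_eq := by simpa only [map_mul] using! congrArg F h.t_eq
  w_eq := by simpa only [map_mul] using! congrArg F h.w_eq

theorem smul (h : Corresponds a b c Φ Ψ) {ζ : ℂ}
    (hw : Φ' (X 0) = ζ • Φ (X 0)) (ht : Φ' (X 1) = Φ (X 1)) (hz : Φ' (X 2) = Φ (X 2))
    (hz' : Ψ' (X 0) = Ψ (X 0)) (ht' : Ψ' (X 1) = Ψ (X 1)) (hw' : Ψ' (X 2) = ζ • Ψ (X 2)) :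
    Corresponds a b c Φ' Ψ' where
  z_eq := by rw [hz', hz, h.z_eq]
  t_eq := by
    rw [ht', map_D₁_congr hz, h.t_eq]
    simp only [map_add, map_mul, algHom_C, map_A₁_congr hz, map_B₁_congr hz, ht]
  w_eq := by rw [hw', map_D₁_congr hz, smul_mul_assoc, h.w_eq, map_mul, map_mul, hw, ht,
    smul_mul_assoc]

theorem map_N₁' (h : Corresponds a b c Φ Ψ) : Ψ (N₁' a b c) = Φ (A₁ b c * B₁ b c * X 1) := by
  have ht := h.t_eq
  simp only [map_add, map_mul, algHom_C] at ht
  simp only [N₁', map_sub, map_mul, algHom_C, map_D₁'_eq h.z_eq, map_B₁'_eq h.z_eq]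
  linear_combination ht

theorem isUnit_E₂_iff (h : Corresponds a b c Φ Ψ) :
    IsUnit (Ψ (E₂ a b c)) ↔ IsUnit (Φ (E₁ a b c)) := by
  simp only [E₁, E₂, map_mul, map_A₁'_eq h.z_eq, map_B₁'_eq h.z_eq, map_D₁'_eq h.z_eq, h.map_N₁',
    IsUnit.mul_iff]
  tauto

theorem sq_mul_pS₂ (h : Corresponds a b c Φ Ψ) :
    Φ (D₁ a b c) ^ 2 * Ψ (pS₂ a b c) = Φ (A₁ b c) * Φ (B₁ b c) * Φ (pS₁ a b c) := by
  have ht := h.t_eq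
  have hw := h.w_eq
  have hD : Φ (D₁ a b c) =
      Φ (A₁ b c) * algebraMap ℂ T (b₁ a b c) - Φ (B₁ b c) * algebraMap ℂ T (a₁ a b c) := by
    simp only [D₁, map_sub, map_mul, algHom_C]
  simp only [map_add, map_mul, algHom_C] at ht hw
  simp only [pS₁, pS₂, map_sub, map_mul, map_add, map_pow, map_one, algHom_C, map_A₁'_eq h.z_eq,
    map_B₁'_eq h.z_eq, h.z_eq, ← hD]
  have ht' : (Ψ (X 1) + 1) * Φ (D₁ a b c) =
      Φ (A₁ b c) * (Φ (B₁ b c) * Φ (X 1) + algebraMap ℂ T (b₁ a b c)) := by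
    linear_combination ht + hD
  have hw3 : Ψ (X 2) ^ 3 * Φ (D₁ a b c) ^ 3 = Φ (X 0) ^ 3 * Φ (X 1) ^ 3 := by
    rw [← mul_pow, hw, mul_pow]
  linear_combination Φ (X 2) * (Φ (X 2) - 1) * Φ (A₁ b c) * Φ (B₁ b c) * hw3
    - (Ψ (X 1) + 1) * Φ (D₁ a b c) * ht
    - (Φ (A₁ b c) * Φ (B₁ b c) * Φ (X 1) + algebraMap ℂ T (a₁ a b c) * Φ (B₁ b c)) * ht'

theorem pS₂_eq_zero_iff (h : Corresponds a b c Φ Ψ) (hE : IsUnit (Φ (E₁ a b c))) :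
    Ψ (pS₂ a b c) = 0 ↔ Φ (pS₁ a b c) = 0 := by
  simp only [E₁, map_mul, IsUnit.mul_iff] at hE
  obtain ⟨⟨hAB, hD⟩, -⟩ := hE
  rw [← (hD.pow 2).mul_right_eq_zero, h.sq_mul_pS₂, (hAB.1.mul hAB.2).mul_right_eq_zero]

theorem unique_right (hD : IsUnit (Φ (D₁ a b c))) (h : Corresponds a b c Φ Ψ)
    (h' : Corresponds a b c Φ Ψ') : Ψ = Ψ' := by
  ext i
  fin_cases i
  · exact h.z_eq.trans h'.z_eq.symm
  · exact hD.mul_right_cancel (h.t_eq.trans h'.t_eq.symm)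
  · exact hD.mul_right_cancel (h.w_eq.trans h'.w_eq.symm)

theorem comp_scaling_comm {K₁ K₂ : Type*} [CommRing K₁] [Algebra ℂ K₁] [CommRing K₂] [Algebra ℂ K₂]
    {Φ : MvPolynomial (Fin 3) ℂ →ₐ[ℂ] K₁} {Ψ : MvPolynomial (Fin 3) ℂ →ₐ[ℂ] K₂}
    {φ : K₂ →ₐ[ℂ] K₁} {σ₁ : K₁ →ₐ[ℂ] K₁} {σ₂ : K₂ →ₐ[ℂ] K₂} {ζ : ℂ}
    (h : Corresponds a b c Φ (φ.comp Ψ)) (hD : IsUnit (Φ (D₁ a b c)))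
    (hw : σ₁ (Φ (X 0)) = ζ • Φ (X 0)) (hfix : ∀ j ≠ 0, σ₁ (Φ (X j)) = Φ (X j))
    (hw' : σ₂ (Ψ (X 2)) = ζ • Ψ (X 2)) (hfix' : ∀ j ≠ 2, σ₂ (Ψ (X j)) = Ψ (X j)) :
    φ.comp (σ₂.comp Ψ) = σ₁.comp (φ.comp Ψ) := by
  refine unique_right (Φ := σ₁.comp Φ) (hD.map σ₁) ?_ (h.comp σ₁)
  exact h.smul hw (hfix 1 (by decide)) (hfix 2 (by decide)) (congrArg φ (hfix' 0 (by decide)))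
    (congrArg φ (hfix' 1 (by decide))) ((congrArg φ hw').trans (map_smul φ _ _))

theorem unique_left (hE : IsUnit (Ψ (E₂ a b c))) (h : Corresponds a b c Φ Ψ)
    (h' : Corresponds a b c Φ' Ψ) : Φ = Φ' := by
  have hE₁ := h.isUnit_E₂_iff.1 hE
  simp only [E₁, map_mul, IsUnit.mul_iff] at hE₁
  obtain ⟨⟨hAB, -⟩, ht⟩ := hE₁
  have hz : Φ (X 2) = Φ' (X 2) := h.z_eq.symm.trans h'.z_eq
  have ht_eq : Φ (X 1) = Φ' (X 1) := by
    have hN := h.map_N₁'.symm.trans h'.map_N₁'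
    rw [map_mul, map_mul, map_mul, map_mul, ← map_A₁_congr hz, ← map_B₁_congr hz] at hN
    exact (hAB.1.mul hAB.2).mul_left_cancel hN
  have hw_eq : Φ (X 0) = Φ' (X 0) := by
    have hw : Φ (X 0 * X 1) = Φ' (X 0 * X 1) := by
      rw [← h.w_eq, ← h'.w_eq, map_D₁_congr hz]
    rw [map_mul, map_mul, ← ht_eq] at hw
    exact ht.mul_right_cancel hw
  ext i
  fin_cases i
  exacts [hw_eq, ht_eq, hz]

theorem exists_right (hD : IsUnit (Φ (D₁ a b c))) : ∃ Ψ, Corresponds a b c Φ Ψ := by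
  obtain ⟨i, hi⟩ := hD.exists_left_inv
  refine ⟨aeval ![Φ (X 2), Φ (A₁ b c * B₁ b c * X 1 + C (a₁ a b c) * B₁ b c) * i,
    Φ (X 0 * X 1) * i], ?_, ?_, ?_⟩
  · simp
  · simp [mul_assoc, hi]
  · simp [mul_assoc, hi]

theorem exists_left (hE : IsUnit (Ψ (E₂ a b c))) : ∃ Φ, Corresponds a b c Φ Ψ := by
  simp only [E₂, map_mul, IsUnit.mul_iff] at hE
  obtain ⟨⟨hAB, -⟩, hN⟩ := hE
  obtain ⟨i, hi⟩ := (hAB.1.mul hAB.2).exists_left_inv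
  obtain ⟨j, hj⟩ := hN.exists_left_inv
  let Φ : MvPolynomial (Fin 3) ℂ →ₐ[ℂ] T :=
    aeval ![Ψ (X 2) * Ψ (D₁' a b c) * (j * Ψ (A₁' b c) * Ψ (B₁' b c)), Ψ (N₁' a b c) * i, Ψ (X 0)]
  have hw : Φ (X 0) = Ψ (X 2) * Ψ (D₁' a b c) * (j * Ψ (A₁' b c) * Ψ (B₁' b c)) := by simp [Φ]
  have ht : Φ (X 1) = Ψ (N₁' a b c) * i := by simp [Φ]
  have hz : Ψ (X 0) = Φ (X 2) := by simp [Φ]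
  have hN : Ψ (N₁' a b c) =
      Ψ (D₁' a b c) * Ψ (X 1) - Ψ (B₁' b c) * algebraMap ℂ T (a₁ a b c) := by
    simp only [N₁', map_sub, map_mul, algHom_C]
  refine ⟨Φ, hz, ?_, ?_⟩
  · simp only [map_add, map_mul, algHom_C, ← map_A₁'_eq hz, ← map_B₁'_eq hz, ← map_D₁'_eq hz, ht]
    linear_combination -Ψ (N₁' a b c) * hi - hN
  · simp only [map_mul, ← map_D₁'_eq hz, hw, ht]
    linear_combination -Ψ (X 2) * Ψ (D₁' a b c) * (hi + i * Ψ (A₁' b c) * Ψ (B₁' b c) * hj)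

end Corresponds

end Correspondence

section Coprimality

variable {k σ : Type*}

theorem isRelPrime_of_eval [CommSemiring k] {f p : MvPolynomial σ k} (hp : Irreducible p)
    (x : σ → k) (hpx : eval x p = 0) (hfx : eval x f ≠ 0) : IsRelPrime f p := by
  refine (hp.isRelPrime_iff_not_dvd.2 fun ⟨q, hq⟩ => hfx ?_).symm
  rw [hq, map_mul, hpx, zero_mul]

theorem irreducible_C_mul_C_sub_X [Field k] {u : k} (hu : u ≠ 0) (v : k) (i : σ) :
    Irreducible (C u * (C v - X i)) := by
  have h : (C u * (C v - X i) : MvPolynomial σ k) = C (-u) * X i + C (u * v) := by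
    rw [C_neg, C_mul]
    ring
  have hC : IsUnit (C (-u) : MvPolynomial σ k) := (isUnit_iff_ne_zero.2 (neg_ne_zero.2 hu)).map C
  rw [h]
  exact irreducible_mul_X_add _ _ i hC.ne_zero (by simp) (by rw [vars_C]; simp) hC.isRelPrime_left

variable {a b c : ℂ}

theorem irreducible_A₁ (hbc : b ≠ c) : Irreducible (A₁ b c) :=
  irreducible_C_mul_C_sub_X (inv_ne_zero (sub_ne_zero.2 hbc)) b 2

theorem irreducible_B₁ (hbc : b ≠ c) : Irreducible (B₁ b c) :=
  irreducible_C_mul_C_sub_X (inv_ne_zero (sub_ne_zero.2 hbc.symm)) c 2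

theorem irreducible_A₁' (hbc : b ≠ c) : Irreducible (A₁' b c) :=
  irreducible_C_mul_C_sub_X (inv_ne_zero (sub_ne_zero.2 hbc)) b 0

theorem irreducible_B₁' (hbc : b ≠ c) : Irreducible (B₁' b c) :=
  irreducible_C_mul_C_sub_X (inv_ne_zero (sub_ne_zero.2 hbc.symm)) c 0

theorem D₁_eq (hbc : b ≠ c) : D₁ a b c = C (c - b)⁻¹ * (C a - X 2) := by
  have := sub_ne_zero.2 hbc
  have := sub_ne_zero.2 hbc.symm
  refine MvPolynomial.funext fun x => ?_
  simp only [D₁, A₁, B₁, a₁, b₁, map_sub, map_mul, eval_C, eval_X]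
  field_simp
  ring

theorem D₁'_eq (hbc : b ≠ c) : D₁' a b c = C (c - b)⁻¹ * (C a - X 0) := by
  simpa [D₁, D₁', A₁, A₁', B₁, B₁'] using congrArg (rename ![1, 2, 0]) (D₁_eq (a := a) hbc)

theorem irreducible_D₁ (hbc : b ≠ c) : Irreducible (D₁ a b c) :=
  D₁_eq hbc ▸ irreducible_C_mul_C_sub_X (inv_ne_zero (sub_ne_zero.2 hbc.symm)) a 2

theorem irreducible_D₁' (hbc : b ≠ c) : Irreducible (D₁' a b c) :=
  D₁'_eq hbc ▸ irreducible_C_mul_C_sub_X (inv_ne_zero (sub_ne_zero.2 hbc.symm)) a 0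

theorem isRelPrime_pS₁_E₁ (hab : a ≠ b) (hac : a ≠ c) (hbc : b ≠ c) :
    IsRelPrime (pS₁ a b c) (E₁ a b c) := by
  have hab' := sub_ne_zero.2 hab
  have hac' := sub_ne_zero.2 hac
  have hbc' := sub_ne_zero.2 hbc
  have hcb' := sub_ne_zero.2 hbc.symm
  have hpS₁ (z : ℂ) : eval ![0, 0, z] (pS₁ a b c) ≠ 0 := by
    simp [pS₁, a₁, b₁, hab', hac', hbc', hcb']
  refine .mul_right (.mul_right (.mul_right ?_ ?_) ?_) ?_
  · exact isRelPrime_of_eval (irreducible_A₁ hbc) ![0, 0, b] (by simp [A₁]) (hpS₁ b)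
  · exact isRelPrime_of_eval (irreducible_B₁ hbc) ![0, 0, c] (by simp [B₁]) (hpS₁ c)
  · exact isRelPrime_of_eval (irreducible_D₁ hbc) ![0, 0, a] (by simp [D₁_eq hbc]) (hpS₁ a)
  · exact isRelPrime_of_eval X_prime.irreducible ![0, 0, 0] (by simp) (hpS₁ 0)

theorem irreducible_N₁' (hab : a ≠ b) (hac : a ≠ c) (hbc : b ≠ c) :
    Irreducible (N₁' a b c) := by
  have hab' := sub_ne_zero.2 hab
  have hca' := sub_ne_zero.2 hac.symm
  have hbc' := sub_ne_zero.2 hbc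
  have hcb' := sub_ne_zero.2 hbc.symm
  have hrel : IsRelPrime (B₁' b c * C (a₁ a b c)) (D₁' a b c) :=
    isRelPrime_of_eval (irreducible_D₁' hbc) ![a, 0, 0] (by simp [D₁'_eq hbc])
      (by simp [a₁, B₁', hab', hca', hbc', hcb'])
  have hvars (u v : ℂ) : 1 ∉ (C u * (C v - X 0) : MvPolynomial (Fin 3) ℂ).vars := by
    intro h
    have h' : 1 ∈ (C v - X 0 : MvPolynomial (Fin 3) ℂ).vars := by
      simpa only [vars_C, Finset.empty_union] using vars_mul _ _ h
    simpa [vars_C] using vars_sub_subset _ h'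
  rw [N₁', sub_eq_add_neg]
  refine irreducible_mul_X_add _ _ 1 (irreducible_D₁' hbc).ne_zero ?_ ?_ hrel.symm.neg_right
  · rw [D₁'_eq hbc]
    exact hvars _ _
  · rw [B₁', mul_right_comm, ← C_mul, vars_neg]
    exact hvars _ _

theorem isRelPrime_pS₂_E₂ (ha0 : a ≠ 0) (hb0 : b ≠ 0) (hc0 : c ≠ 0) (hab : a ≠ b) (hac : a ≠ c)
    (hbc : b ≠ c) : IsRelPrime (pS₂ a b c) (E₂ a b c) := by
  have hab' := sub_ne_zero.2 hab
  have hac' := sub_ne_zero.2 hac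
  have hbc' := sub_ne_zero.2 hbc
  have hcb' := sub_ne_zero.2 hbc.symm
  have hpS₂ (z : ℂ) : eval ![z, 1, 0] (pS₂ a b c) ≠ 0 := by simp [pS₂]
  refine .mul_right (.mul_right (.mul_right ?_ ?_) ?_) ?_
  · exact isRelPrime_of_eval (irreducible_A₁' hbc) ![b, 1, 0] (by simp [A₁']) (hpS₂ b)
  · exact isRelPrime_of_eval (irreducible_B₁' hbc) ![c, 1, 0] (by simp [B₁']) (hpS₂ c)
  · exact isRelPrime_of_eval (irreducible_D₁' hbc) ![a, 1, 0] (by simp [D₁'_eq hbc]) (hpS₂ a)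
  · -- The zero of `δ t₃ - a₁ B₁` on the line `z = w₁ = 0`.
    refine isRelPrime_of_eval (irreducible_N₁' hab hac hbc)
      ![0, (a - b) * c / (a * (b - c)), 0] ?_ ?_
    · simp only [N₁', D₁'_eq hbc, B₁', a₁, map_sub, map_mul, eval_C, eval_X,
        Matrix.cons_val_zero, Matrix.cons_val_one, sub_zero]
      field_simp
      ring
    · have : (a - b) * c / (a * (b - c)) + 1 = b * (a - c) / (a * (b - c)) := by
        field_simp
        ring
      simp [pS₂, this, ha0, hb0, hc0, hab', hac', hbc']

end Coprimality

section FunctionFields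

variable {a b c : ℂ}

theorem exists_openSubset_algEquiv (a b c : ℂ) :
    ∃ e : OpenSubset (pS₂ a b c) (E₂ a b c) ≃ₐ[ℂ] OpenSubset (pS₁ a b c) (E₁ a b c),
      Corresponds a b c (toOpen ℂ (pS₁ a b c) (E₁ a b c))
        (e.toAlgHom.comp (toOpen ℂ (pS₂ a b c) (E₂ a b c))) := by
  have hE₁ := isUnit_toOpen (k := ℂ) (pS₁ a b c) (E₁ a b c)
  have hE₂ := isUnit_toOpen (k := ℂ) (pS₂ a b c) (E₂ a b c)
  have hD₁ := isUnit_map_D₁ hE₁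
  obtain ⟨Ψ, hΨ⟩ := Corresponds.exists_right hD₁
  obtain ⟨F, rfl⟩ := exists_comp_toOpen_eq
    ((hΨ.pS₂_eq_zero_iff hE₁).2 (toOpen_self _ _)) (hΨ.isUnit_E₂_iff.2 hE₁)
  obtain ⟨Φ, hΦ⟩ := Corresponds.exists_left hE₂
  have hΦE₁ := hΦ.isUnit_E₂_iff.1 hE₂
  obtain ⟨G, rfl⟩ := exists_comp_toOpen_eq ((hΦ.pS₂_eq_zero_iff hΦE₁).1 (toOpen_self _ _)) hΦE₁
  obtain ⟨e, rfl⟩ := exists_openSubset_algEquiv_of_comp_eq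
    ((hΨ.comp G).unique_right (hD₁.map G) hΦ) ((hΦ.comp F).unique_left (hE₂.map F) hΨ)
  exact ⟨e, hΨ⟩

theorem exists_functionField_algEquiv (ha0 : a ≠ 0) (hb0 : b ≠ 0) (hc0 : c ≠ 0) (hab : a ≠ b)
    (hac : a ≠ c) (hbc : b ≠ c) :
    ∃ φ : FractionRing (HSurf (pS₂ a b c)) ≃ₐ[ℂ] FractionRing (HSurf (pS₁ a b c)),
      Corresponds a b c (toFrac ℂ (pS₁ a b c))
        (φ.toAlgHom.comp (toFrac ℂ (pS₂ a b c))) := by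
  obtain ⟨e, he⟩ := exists_openSubset_algEquiv a b c
  obtain ⟨φ, ι, hι, hφ⟩ := exists_toFrac_algEquiv_extending
    (isRelPrime_pS₂_E₂ ha0 hb0 hc0 hab hac hbc) (isRelPrime_pS₁_E₁ hab hac hbc) e
  refine ⟨φ, ?_⟩
  rw [hφ, ← hι]
  exact he.comp ι

theorem scaleX_pS₁ {u : ℂˣ} (hu : (u : ℂ) ^ 3 = 1) : scaleX 0 u (pS₁ a b c) = pS₁ a b c := by
  have h : ((C (u : ℂ)) ^ 3 : MvPolynomial (Fin 3) ℂ) = 1 := by rw [← C_pow, hu, C_1]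
  have hC (x : ℂ) : scaleX (0 : Fin 3) u (C x) = C x := (scaleX _ u).commutes x
  simp [pS₁, A₁, B₁, scaleX_X_self, scaleX_X_of_ne, mul_pow, h, hC]

theorem scaleX_pS₂ {u : ℂˣ} (hu : (u : ℂ) ^ 3 = 1) : scaleX 2 u (pS₂ a b c) = pS₂ a b c := by
  have h : ((C (u : ℂ)) ^ 3 : MvPolynomial (Fin 3) ℂ) = 1 := by rw [← C_pow, hu, C_1]
  have hC (x : ℂ) : scaleX (2 : Fin 3) u (C x) = C x := (scaleX _ u).commutes x
  simp [pS₂, A₁', B₁', scaleX_X_self, scaleX_X_of_ne, mul_pow, h, hC]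

theorem not_pS₁_dvd_X_zero (hb0 : b ≠ 0) : ¬ pS₁ a b c ∣ X 0 := by
  rintro ⟨q, hq⟩
  -- On the plane `z = 0` the surface is `(A₁ t₂ + a₁) (B₁ t₂ + b₁) = 0`, whatever `w` is.
  have hp : eval ![1, (b - a) / b, 0] (pS₁ a b c) = 0 := by
    simp only [pS₁, A₁, a₁, map_sub, map_mul, map_add, map_pow, map_one, eval_C, eval_X,
      Matrix.cons_val_zero, Matrix.cons_val_one, Matrix.cons_val]
    field_simp
    ring
  simpa [hp] using congrArg (eval ![1, (b - a) / b, 0]) hq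

theorem not_pS₂_dvd_X_two : ¬ pS₂ a b c ∣ X 2 := by
  rintro ⟨q, hq⟩
  have hp : eval ![0, 0, 1] (pS₂ a b c) = 0 := by simp [pS₂]
  simpa [hp] using congrArg (eval ![0, 0, 1]) hq

theorem exists_units_orderOf_three : ∃ u : ℂˣ, (u : ℂ) = ω ^ 2 ∧ orderOf u = 3 := by
  have hω : IsPrimitiveRoot (ω ^ 2) 3 :=
    (Complex.isPrimitiveRoot_exp 3 (by norm_num)).pow_of_coprime 2 (by norm_num)
  refine ⟨(hω.isUnit (by norm_num)).unit, rfl, ?_⟩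
  rw [← orderOf_units]
  exact hω.eq_orderOf.symm

end FunctionFields

/-- For pairwise distinct `a, b, c ∈ ℂ ∖ {0,1}` there is a `ℂ`-algebra
isomorphism between the function fields of `S₁` and `S₂` intertwining the order-3
automorphisms `w ↦ ω²·w` and `w₁ ↦ ω²·w₁` (each fixing the remaining coordinates); an
isomorphism is induced by the substitution `t₃ = (t₂ + a₁/A₁)/(b₁/B₁ − a₁/A₁)`,
`w₁ = w·t₂/(A₁B₁·(b₁/B₁ − a₁/A₁))`, with `z` unchanged.  (We record the induced
isomorphism in the direction `φ : Frac(S₂) → Frac(S₁)`; since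
`A₁B₁(b₁/B₁ − a₁/A₁) = A₁b₁ − B₁a₁`, the substitution reads, denominator-free,
`φ(t₃)·(A₁b₁ − B₁a₁) = A₁B₁·t₂ + a₁·B₁` and `φ(w₁)·(A₁b₁ − B₁a₁) = w·t₂`.) -/
theorem stmt5 (a b c : ℂ) (ha0 : a ≠ 0) (ha1 : a ≠ 1) (hb0 : b ≠ 0) (hb1 : b ≠ 1)
    (hc0 : c ≠ 0) (hc1 : c ≠ 1) (hab : a ≠ b) (hac : a ≠ c) (hbc : b ≠ c) :
    ∃ (φ : FractionRing (HSurf (pS₂ a b c)) ≃ₐ[ℂ] FractionRing (HSurf (pS₁ a b c)))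
      (σ₁ : FractionRing (HSurf (pS₁ a b c)) ≃ₐ[ℂ] FractionRing (HSurf (pS₁ a b c)))
      (σ₂ : FractionRing (HSurf (pS₂ a b c)) ≃ₐ[ℂ] FractionRing (HSurf (pS₂ a b c))),
      orderOf σ₁ = 3 ∧
      σ₁ (cls (pS₁ a b c) (X 0)) = (ω ^ 2 : ℂ) • cls (pS₁ a b c) (X 0) ∧
      σ₁ (cls (pS₁ a b c) (X 1)) = cls (pS₁ a b c) (X 1) ∧
      σ₁ (cls (pS₁ a b c) (X 2)) = cls (pS₁ a b c) (X 2) ∧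
      orderOf σ₂ = 3 ∧
      σ₂ (cls (pS₂ a b c) (X 2)) = (ω ^ 2 : ℂ) • cls (pS₂ a b c) (X 2) ∧
      σ₂ (cls (pS₂ a b c) (X 0)) = cls (pS₂ a b c) (X 0) ∧
      σ₂ (cls (pS₂ a b c) (X 1)) = cls (pS₂ a b c) (X 1) ∧
      (∀ k, φ (σ₂ k) = σ₁ (φ k)) ∧
      φ (cls (pS₂ a b c) (X 0)) = cls (pS₁ a b c) (X 2) ∧
      φ (cls (pS₂ a b c) (X 1))
          * cls (pS₁ a b c) (A₁ b c * C (b₁ a b c) - B₁ b c * C (a₁ a b c))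
        = cls (pS₁ a b c) (A₁ b c * B₁ b c * X 1 + C (a₁ a b c) * B₁ b c) ∧
      φ (cls (pS₂ a b c) (X 2))
          * cls (pS₁ a b c) (A₁ b c * C (b₁ a b c) - B₁ b c * C (a₁ a b c))
        = cls (pS₁ a b c) (X 0 * X 1) := by
  obtain ⟨u, hu, hu3⟩ := exists_units_orderOf_three
  have hu1 : (u : ℂ) ^ 3 = 1 := by rw [← Units.val_pow_eq_pow_val, ← hu3, pow_orderOf_eq_one]; rfl
  obtain ⟨φ, hφ⟩ := exists_functionField_algEquiv ha0 hb0 hc0 hab hac hbc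
  obtain ⟨σ₁, hσ₁, hw₁, hfix₁⟩ :=
    exists_fracAut_scaling (scaleX_pS₁ hu1) (not_pS₁_dvd_X_zero (a := a) (c := c) hb0)
  obtain ⟨σ₂, hσ₂, hw₂, hfix₂⟩ :=
    exists_fracAut_scaling (scaleX_pS₂ hu1) (not_pS₂_dvd_X_two (a := a) (b := b) (c := c))
  have hD := isUnit_map_D₁ (isUnit_toFrac (k := ℂ) (isRelPrime_pS₁_E₁ hab hac hbc))
  have hφσ := hφ.comp_scaling_comm (σ₁ := σ₁.toAlgHom) (σ₂ := σ₂.toAlgHom) hD hw₁ hfix₁ hw₂ hfix₂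
  rw [hu] at hw₁ hw₂
  exact ⟨φ, σ₁, σ₂, hσ₁.trans hu3, hw₁, hfix₁ 1 (by decide), hfix₁ 2 (by decide),
    hσ₂.trans hu3, hw₂, hfix₂ 0 (by decide), hfix₂ 1 (by decide),
    semiconj_of_comp_toFrac_eq hφσ, hφ.z_eq, hφ.t_eq, hφ.w_eq⟩
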